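/- arXiv:hep-th/9602163 — 3 statements merged into one kernel-verified Lean document; each statement's English description precedes it below -/
import Mathlib

section
/- Let k be a field of characteristic zero and V a k-vector space with an internal direct sum decomposition V = ⨁_{n∈ℕ} Vₙ into subspaces (each v ∈ V has components vₙ ∈ Vₙ, all but finitely many zero). Let d, δ : V → V be linear maps such that d ∘ d = 0, d(Vₙ) ⊆ Vₙ for all n, and (d ∘ δ + δ ∘ d) v = n • v for every v ∈ Vₙ and every n. If f ∈ V satisfies d f = 0, then f = f₀ + d g, where f₀ is the component of f in V₀ and g = δ(Σ_{n≥1} n⁻¹ • fₙ). -/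
/-! Write `Δ = d ∘ δ + δ ∘ d`, `f = ∑ᵢ Fᵢ` with `Δ Fᵢ = cᵢ Fᵢ`, and `h = ∑ᵢ cᵢ⁻¹ Fᵢ`, where
`0⁻¹ = 0`. Then `Δ h` is `f` without its zero modes. As `Δ h = d (δ h) + δ (d h)`, it remains to
see that `d h = 0`. The vectors `d Fᵢ` satisfy `Δ (d Fᵢ) = cᵢ d Fᵢ` and sum to `d f = 0`. A
polynomial in `Δ` that takes the value `cᵢ⁻¹` at each `cᵢ` maps this sum to `d h`. -/

theorem sum_smul_eq_zero_of_apply_eq_smul {k V ι : Type*} [Field k] [AddCommGroup V] [Module k V]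
    {T : Module.End k V} {s : Finset ι} {c : ι → k} {v : ι → V}
    (hv : ∀ i ∈ s, T (v i) = c i • v i) (hsum : ∑ i ∈ s, v i = 0) (g : k → k) :
    ∑ i ∈ s, g (c i) • v i = 0 := by
  classical
  let p := Lagrange.interpolate (s.image c) id g
  have hp : ∀ i ∈ s, p.eval (c i) = g (c i) := fun i hi =>
    Lagrange.eval_interpolate_at_node g Function.injective_id.injOn (Finset.mem_image_of_mem c hi)
  calc
    ∑ i ∈ s, g (c i) • v i = ∑ i ∈ s, Polynomial.aeval T p (v i) :=
      Finset.sum_congr rfl fun i hi => by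
        rw [Module.End.aeval_apply_of_mem_apply_eq_smul (hv i hi), hp i hi]
    _ = 0 := by rw [← map_sum, hsum, map_zero]

theorem basic_lemma_closed_eq_zero_mode_add_exact_general
    {k V ι : Type*} [Field k] [DecidableEq k] [AddCommGroup V] [Module k V]
    {d δ : V →ₗ[k] V} {c : ι → k} {F : ι →₀ V}
    (hF : ∀ i, (d ∘ₗ δ + δ ∘ₗ d) (F i) = c i • F i)
    (hdF : ∀ i, (d ∘ₗ δ + δ ∘ₗ d) (d (F i)) = c i • d (F i))
    (hclosed : d (F.sum fun _ v => v) = 0) :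
    (F.sum fun _ v => v) =
      (F.sum fun i v => if c i = 0 then v else 0) + d (δ (F.sum fun i v => (c i)⁻¹ • v)) := by
  set h := F.sum fun i v => (c i)⁻¹ • v with h_def
  have hdh : d h = 0 := by
    simp only [h_def, Finsupp.sum, map_sum, map_smul] at hclosed ⊢
    exact sum_smul_eq_zero_of_apply_eq_smul (fun i _ => hdF i) hclosed (·⁻¹)
  have hdδh : d (δ h) = (d ∘ₗ δ + δ ∘ₗ d) h := by simp [hdh]
  have hΔh : (d ∘ₗ δ + δ ∘ₗ d) h = F.sum fun i v => (c i)⁻¹ • c i • v := by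
    simp only [h_def, Finsupp.sum, map_sum, map_smul, hF]
  rw [hdδh, hΔh, ← Finsupp.sum_add]
  refine Finsupp.sum_congr fun i _ => ?_
  by_cases hi : c i = 0
  · simp [hi]
  · simp [hi, inv_smul_smul₀]

/-- **Basic Lemma.** Let `V = ⨁ₙ Vₙ` be an ℕ-graded vector space over a
field of characteristic zero, `d` a grading-preserving differential with `d ∘ d = 0`, and
`δ` a linear map such that the anticommutator `d ∘ δ + δ ∘ d` acts on `Vₙ` as
multiplication by `n`.  Every `d`-closed element `f` with components `F n ∈ Vₙ`
(finitely many nonzero, `f = Σₙ F n`) equals its degree-zero component plus a `d`-exact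
term: `f = F 0 + d (δ (Σ_{n≥1} n⁻¹ • F n))`.  (In a field `(0 : k)⁻¹ = 0`, so the sum
`F.sum fun n v => (n : k)⁻¹ • v` is exactly the sum over `n ≥ 1`.) -/
theorem basic_lemma_closed_eq_zero_mode_add_exact
    {k V : Type*} [Field k] [CharZero k] [AddCommGroup V] [Module k V]
    (Vs : ℕ → Submodule k V) (hV : DirectSum.IsInternal Vs)
    (d δ : V →ₗ[k] V)
    (hd : d ∘ₗ d = 0)
    (hdV : ∀ n : ℕ, ∀ v ∈ Vs n, d v ∈ Vs n)
    (hΔ : ∀ n : ℕ, ∀ v ∈ Vs n, (d ∘ₗ δ + δ ∘ₗ d) v = (n : k) • v)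
    (f : V) (F : ℕ →₀ V) (hF : ∀ n, F n ∈ Vs n)
    (hf : f = F.sum fun _ v => v)
    (hclosed : d f = 0) :
    f = F 0 + d (δ (F.sum fun n v => (n : k)⁻¹ • v)) := by
  classical
  simpa only [Nat.cast_eq_zero, Finsupp.sum_ite_self_eq', ← hf] using
    basic_lemma_closed_eq_zero_mode_add_exact_general
      (fun n => hΔ n _ (hF n)) (fun n => hΔ n _ (hdV n _ (hF n))) (hf ▸ hclosed)
end

section
/- Let K be a field, V a K-vector space, and d, b : V → V linear maps with d ∘ d = 0. Suppose d ∘ b + b ∘ d = c • id_V + P for some nonzero scalar c ∈ K and some linear map P : V → V. If ω ∈ V satisfies d ω = 0 and P^N ω = 0 for some natural number N, then ω is d-exact; explicitly ω = d ( b ( Σ_{j=0}^{N−1} (−1)^j c^{−(j+1)} • P^j ω ) ). -/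
/-!
As `d ∘ d = 0`, `d` commutes with `d ∘ b + b ∘ d = c • id + P`, so with `P`, and hence with the
truncated Neumann series `S = ∑_{j < N} (-1)^j c^{-(j+1)} P^j` for the formal inverse of
`c • id + P`. Thus `S ω` is closed together with `ω`, and on closed vectors `d ∘ b` acts as
`c • id + P`. So `d (b (S ω)) = (c • id + P) (S ω)`, which differs from `ω` by a multiple of
`P ^ N ω = 0`.
-/

theorem commute_anticommutator_of_mul_self_eq_zero {A : Type*} [NonUnitalSemiring A] {d : A}
    (hd : d * d = 0) (b : A) : Commute d (d * b + b * d) :=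
  calc
    d * (d * b + b * d) = d * b * d := by
      rw [mul_add, ← mul_assoc, hd, zero_mul, zero_add, mul_assoc]
    _ = (d * b + b * d) * d := by rw [add_mul, mul_assoc b, hd, mul_zero, add_zero]

section Algebra

variable {R A : Type*} [CommRing R] [Ring A] [Algebra R A]

theorem commute_of_anticommutator_eq_smul_one_add {d b p : A} {c : R} (hd : d * d = 0)
    (hdb : d * b + b * d = c • 1 + p) : Commute d p := by
  have hdcp : Commute d (c • 1 + p) := hdb ▸ commute_anticommutator_of_mul_self_eq_zero hd b
  simpa using hdcp.sub_right ((Commute.one_right d).smul_right c)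

theorem smul_one_add_mul_sum_range_smul_pow (c : Rˣ) (p : A) (n : ℕ) :
    ((c : R) • 1 + p) *
        ∑ j ∈ Finset.range n, ((-1 : R) ^ j * (↑c⁻¹ : R) ^ (j + 1)) • p ^ j =
      1 - ((-1 : R) ^ n * (↑c⁻¹ : R) ^ n) • p ^ n := by
  let x : A := (-(↑c⁻¹ : R)) • p
  have x_pow (j : ℕ) : x ^ j = ((-1 : R) ^ j * (↑c⁻¹ : R) ^ j) • p ^ j := by
    rw [smul_pow, neg_pow]
  have factor : (c : R) • 1 + p = (c : R) • (1 - x) := by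
    simp [x, smul_smul]
  have sum_eq : ∑ j ∈ Finset.range n, ((-1 : R) ^ j * (↑c⁻¹ : R) ^ (j + 1)) • p ^ j =
      (↑c⁻¹ : R) • ∑ j ∈ Finset.range n, x ^ j := by
    simp only [x_pow, Finset.smul_sum, smul_smul, pow_succ', mul_left_comm]
  rw [factor, sum_eq, smul_mul_smul_comm, c.mul_inv, one_smul, mul_neg_geom_sum, x_pow]

end Algebra

theorem closed_is_exact_of_anticommutator_scalar_add_nilpotent_general
    {R V : Type*} [CommRing R] [AddCommGroup V] [Module R V]
    (d b P : V →ₗ[R] V) (hdP : Commute d P) (c : Rˣ)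
    (hdb : d ∘ₗ b + b ∘ₗ d = (c : R) • LinearMap.id + P)
    (ω : V) (hω : d ω = 0) (N : ℕ) (hP : (P ^ N) ω = 0) :
    ω = d (b (∑ j ∈ Finset.range N, ((-1 : R) ^ j * (↑c⁻¹ : R) ^ (j + 1)) • (P ^ j) ω)) := by
  let S : Module.End R V := ∑ j ∈ Finset.range N, ((-1 : R) ^ j * (↑c⁻¹ : R) ^ (j + 1)) • P ^ j
  have S_apply : S ω = ∑ j ∈ Finset.range N, ((-1 : R) ^ j * (↑c⁻¹ : R) ^ (j + 1)) • (P ^ j) ω := by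
    simp [S]
  have closed : d (S ω) = 0 := by
    have hdS : Commute d S := Commute.sum_right _ _ _ fun j _ => (hdP.pow_right j).smul_right _
    rw [← Module.End.mul_apply, hdS.eq, Module.End.mul_apply, hω, map_zero]
  rw [← S_apply]
  symm
  calc
    d (b (S ω)) = (d ∘ₗ b + b ∘ₗ d) (S ω) := by simp [closed]
    _ = (((c : R) • 1 + P) * S) ω := by rw [hdb]; rfl
    _ = ω - ((-1 : R) ^ N * (↑c⁻¹ : R) ^ N) • (P ^ N) ω := by
      rw [smul_one_add_mul_sum_range_smul_pow]; rfl
    _ = ω := by rw [hP, smul_zero, sub_zero]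

/-- Let `d, b` be linear maps with `d ∘ d = 0` and anticommutator
`d ∘ b + b ∘ d = c • id + P` with `c ≠ 0`.  Every `d`-closed `ω` annihilated by some
power `P ^ N` is `d`-exact, explicitly
`ω = d (b (Σ_{j<N} (-1)^j c⁻¹^(j+1) • P^j ω))`. -/
theorem closed_is_exact_of_anticommutator_scalar_add_nilpotent
    {K V : Type*} [Field K] [AddCommGroup V] [Module K V]
    (d b : V →ₗ[K] V) (hd : d ∘ₗ d = 0)
    (c : K) (hc : c ≠ 0) (P : V →ₗ[K] V)
    (hdb : d ∘ₗ b + b ∘ₗ d = c • LinearMap.id + P)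
    (ω : V) (hω : d ω = 0) (N : ℕ) (hP : (P ^ N) ω = 0) :
    ω = d (b (∑ j ∈ Finset.range N, ((-1 : K) ^ j * (c⁻¹) ^ (j + 1)) • (P ^ j) ω)) := by
  simpa using closed_is_exact_of_anticommutator_scalar_add_nilpotent_general d b P
    (commute_of_anticommutator_eq_smul_one_add hd hdb) (Units.mk0 c hc) hdb ω hω N hP
end

section
/- Let k be a field, L a Lie algebra over k, and V a k-vector space which is an L-module with action ρ(x) v = x • v. Let s : V → V be a linear map with s ∘ s = 0, and suppose that for every x ∈ L there is a linear map h_x : V → V such that ρ(x) = s ∘ h_x + h_x ∘ s. (Then each ρ(x) commutes with s, so Z = ker s is an L-submodule.) Assume that Z = ker s is a semisimple L-module (a sum of irreducible Lie submodules). Then every ω ∈ V with s ω = 0 can be written as ω = ω_inv + s η for some η ∈ V and some ω_inv ∈ V with ρ(x) ω_inv = 0 for all x ∈ L. -/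
/-!
In a semisimple module `M`, a complement `C` of `⁅L, M⁆` satisfies `⁅L, C⁆ ⊆ ⁅L, M⁆ ∩ C = 0`, so
`M` is the sum of its invariants and `⁅L, M⁆`. For `M = ker s` the submodule `⁅L, M⁆` consists of
exact elements, because the term `hₓ ∘ s` of the homotopy vanishes on `ker s`.
-/

theorem apply_mem_range_of_nullHomotopy {R M M' M'' : Type*} [Semiring R]
    [AddCommMonoid M] [Module R M] [AddCommMonoid M'] [Module R M']
    [AddCommMonoid M''] [Module R M'']
    {d₁ : M' →ₗ[R] M} {d₂ : M →ₗ[R] M''} {f : M →ₗ[R] M} {h₁ : M →ₗ[R] M'} {h₂ : M'' →ₗ[R] M}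
    (hf : ∀ m, f m = d₁ (h₁ m) + h₂ (d₂ m)) {z : M} (hz : d₂ z = 0) :
    f z ∈ LinearMap.range d₁ :=
  ⟨h₁ z, by rw [hf, hz, map_zero, add_zero]⟩

section LieModule

open LieModule

variable {R L M : Type*} [CommRing R] [LieRing L] [LieAlgebra R L]
  [AddCommGroup M] [Module R M] [LieRingModule L M] [LieModule R L M]

theorem le_maxTrivSubmodule_of_disjoint_top_lie_top {N : LieSubmodule R L M}
    (hN : Disjoint ⁅(⊤ : LieIdeal R L), (⊤ : LieSubmodule R L M)⁆ N) :
    N ≤ maxTrivSubmodule R L M := by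
  rw [le_max_triv_iff_bracket_eq_bot, ← le_bot_iff]
  exact hN (LieSubmodule.mono_lie_right ⊤ le_top) (LieSubmodule.lie_le_right N ⊤)

theorem codisjoint_maxTrivSubmodule_top_lie_top [ComplementedLattice (LieSubmodule R L M)] :
    Codisjoint (maxTrivSubmodule R L M) ⁅(⊤ : LieIdeal R L), (⊤ : LieSubmodule R L M)⁆ := by
  obtain ⟨C, hC⟩ := exists_isCompl ⁅(⊤ : LieIdeal R L), (⊤ : LieSubmodule R L M)⁆
  exact hC.codisjoint.symm.mono_left (le_maxTrivSubmodule_of_disjoint_top_lie_top hC.disjoint)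

theorem exists_invariant_add_mem_of_forall_lie_mem [ComplementedLattice (LieSubmodule R L M)]
    {P : Submodule R M} (hP : ∀ (x : L) (m : M), ⁅x, m⁆ ∈ P) (m : M) :
    ∃ n, (∀ x : L, ⁅x, n⁆ = 0) ∧ ∃ p ∈ P, m = n + p := by
  let P' : LieSubmodule R L M := { P with lie_mem := fun {x m} _ => hP x m }
  have lie_le_P' : ⁅(⊤ : LieIdeal R L), (⊤ : LieSubmodule R L M)⁆ ≤ P' :=
    (LieSubmodule.lie_le_iff ..).mpr fun x _ m _ => hP x m
  have hm : m ∈ maxTrivSubmodule R L M ⊔ P' :=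
    (codisjoint_maxTrivSubmodule_top_lie_top.mono_right lie_le_P').eq_top ▸ LieSubmodule.mem_top m
  obtain ⟨n, hn, p, hp, rfl⟩ := (LieSubmodule.mem_sup _ _ m).mp hm
  exact ⟨n, hn, p, hp, rfl⟩

theorem closed_eq_invariant_add_exact_of_semisimple_kernel_general {M' M'' : Type*}
    [AddCommMonoid M'] [Module R M'] [AddCommMonoid M''] [Module R M'']
    (d₁ : M' →ₗ[R] M) (d₂ : M →ₗ[R] M'')
    (hlie : ∀ (x : L) (z : M), d₂ z = 0 → ⁅x, z⁆ ∈ LinearMap.range d₁)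
    (Z : LieSubmodule R L M) (hZ : (Z : Submodule R M) = LinearMap.ker d₂)
    (hss : ComplementedLattice (LieSubmodule R L Z))
    (ω : M) (hω : d₂ ω = 0) :
    ∃ (ωinv : M) (η : M'), (∀ x : L, ⁅x, ωinv⁆ = 0) ∧ ω = ωinv + d₁ η := by
  have mem_Z_iff (z : M) : z ∈ Z ↔ d₂ z = 0 := by
    rw [← LieSubmodule.mem_toSubmodule, hZ, LinearMap.mem_ker]
  have lie_mem (x : L) (z : Z) :
      ⁅x, z⁆ ∈ (LinearMap.range d₁).comap (Z : Submodule R M).subtype :=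
    hlie x z ((mem_Z_iff z).mp z.2)
  obtain ⟨z, hz, b, ⟨η, hη⟩, hzb⟩ :=
    exists_invariant_add_mem_of_forall_lie_mem lie_mem ⟨ω, (mem_Z_iff ω).mpr hω⟩
  exact ⟨z, η, fun x => congrArg Subtype.val (hz x), hη ▸ congrArg Subtype.val hzb⟩

end LieModule

/-- Let `s` be a nilpotent differential on an `L`-module `V` such that
the action of every `x ∈ L` is chain homotopic to zero (`ρ(x) = s ∘ hₓ + hₓ ∘ s`), so that
`Z = ker s` is an `L`-submodule.  If `Z` is a semisimple `L`-module (every Lie submodule of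
`Z` has a complement), then every `s`-closed `ω` can be written as an `L`-invariant element
plus an `s`-exact one: `ω = ω_inv + s η` with `⁅x, ω_inv⁆ = 0` for all `x`. -/
theorem closed_eq_invariant_add_exact_of_semisimple_kernel
    {k L V : Type*} [Field k] [LieRing L] [LieAlgebra k L]
    [AddCommGroup V] [Module k V] [LieRingModule L V] [LieModule k L V]
    (s : V →ₗ[k] V) (hs : s ∘ₗ s = 0)
    (hhomotopy : ∀ x : L, ∃ hx : V →ₗ[k] V, ∀ v : V, ⁅x, v⁆ = s (hx v) + hx (s v))
    (Z : LieSubmodule k L V) (hZ : (Z : Submodule k V) = LinearMap.ker s)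
    (hss : ComplementedLattice (LieSubmodule k L Z))
    (ω : V) (hω : s ω = 0) :
    ∃ ωinv η : V, (∀ x : L, ⁅x, ωinv⁆ = 0) ∧ ω = ωinv + s η := by
  have hlie (x : L) (z : V) (hz : s z = 0) : ⁅x, z⁆ ∈ LinearMap.range s := by
    obtain ⟨hx, hx_homotopy⟩ := hhomotopy x
    exact apply_mem_range_of_nullHomotopy (f := LieModule.toEnd k L V x) hx_homotopy hz
  exact closed_eq_invariant_add_exact_of_semisimple_kernel_general s s hlie Z hZ hss ω hω
end
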